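/- Let A and B be separable unital associative k-algebras with right inverses Γ_A : A → A⊗A and Γ_B : B → B⊗B of the multiplications that are bimodule morphisms, and let τ : B⊗A → A⊗B be a twisting map. Then the two conditions (i) (Γ_A⊗1_B)∘τ = (1_A⊗τ)∘(τ⊗1_A)∘(1_B⊗Γ_A) and (ii) (1_A⊗Γ_B)∘τ = (τ⊗1_B)∘(1_B⊗τ)∘(Γ_B⊗1_A) hold if and only if the twisted tensor product algebra A⊗_τ B is separable with Γ_{A⊗_τ B} = (1_A⊗τ^{-1}⊗1_B)∘(Γ_A⊗Γ_B) a right inverse of its multiplication that is an (A⊗_τ B)-bimodule morphism. -/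

import Mathlib

open scoped TensorProduct

namespace TTP

section Defs

variable (k : Type*) [Field k]

section MidMap

variable {X P Q Y R S : Type*}
  [AddCommGroup X] [Module k X] [AddCommGroup P] [Module k P]
  [AddCommGroup Q] [Module k Q] [AddCommGroup Y] [Module k Y]
  [AddCommGroup R] [Module k R] [AddCommGroup S] [Module k S]

/-- The map `1_X ⊗ f ⊗ 1_Y` (with the canonical reassociations). -/
noncomputable def midMap (f : P ⊗[k] Q →ₗ[k] R ⊗[k] S) :
    (X ⊗[k] P) ⊗[k] (Q ⊗[k] Y) →ₗ[k] (X ⊗[k] R) ⊗[k] (S ⊗[k] Y) :=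
  (TensorProduct.assoc k (X ⊗[k] R) S Y).toLinearMap
    ∘ₗ TensorProduct.map (TensorProduct.assoc k X R S).symm.toLinearMap LinearMap.id
    ∘ₗ TensorProduct.map (TensorProduct.map LinearMap.id f) LinearMap.id
    ∘ₗ TensorProduct.map (TensorProduct.assoc k X P Q).toLinearMap LinearMap.id
    ∘ₗ (TensorProduct.assoc k (X ⊗[k] P) Q Y).symm.toLinearMap

end MidMap

variable {A B : Type*} [AddCommGroup A] [Module k A] [AddCommGroup B] [Module k B]

/-- `(A, mul, unit)` is a unital associative `k`-algebra (diagrammatically). -/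
def IsUnitalAssoc (mul : A ⊗[k] A →ₗ[k] A) (unit : k →ₗ[k] A) : Prop :=
  mul ∘ₗ TensorProduct.map unit LinearMap.id ∘ₗ (TensorProduct.lid k A).symm.toLinearMap
      = LinearMap.id
  ∧ mul ∘ₗ TensorProduct.map LinearMap.id unit ∘ₗ (TensorProduct.rid k A).symm.toLinearMap
      = LinearMap.id
  ∧ mul ∘ₗ TensorProduct.map mul LinearMap.id
      = mul ∘ₗ TensorProduct.map LinearMap.id mul ∘ₗ (TensorProduct.assoc k A A A).toLinearMap

/-- `(A, comul, counit)` is a counital coassociative `k`-coalgebra (diagrammatically). -/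
def IsCounitalCoassoc (comul : A →ₗ[k] A ⊗[k] A) (counit : A →ₗ[k] k) : Prop :=
  (TensorProduct.lid k A).toLinearMap ∘ₗ TensorProduct.map counit LinearMap.id ∘ₗ comul
      = LinearMap.id
  ∧ (TensorProduct.rid k A).toLinearMap ∘ₗ TensorProduct.map LinearMap.id counit ∘ₗ comul
      = LinearMap.id
  ∧ TensorProduct.map comul LinearMap.id ∘ₗ comul
      = (TensorProduct.assoc k A A A).symm.toLinearMap
          ∘ₗ TensorProduct.map LinearMap.id comul ∘ₗ comul

/-- `τ : B ⊗ A → A ⊗ B` is a twisting map for the algebras `A` and `B`: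
it is compatible with both units and with both multiplications. -/
def IsTwisting (mulA : A ⊗[k] A →ₗ[k] A) (unitA : k →ₗ[k] A)
    (mulB : B ⊗[k] B →ₗ[k] B) (unitB : k →ₗ[k] B)
    (τ : B ⊗[k] A →ₗ[k] A ⊗[k] B) : Prop :=
  τ ∘ₗ TensorProduct.map LinearMap.id unitA
      = TensorProduct.map unitA LinearMap.id ∘ₗ (TensorProduct.comm k B k).toLinearMap
  ∧ τ ∘ₗ TensorProduct.map unitB LinearMap.id
      = TensorProduct.map LinearMap.id unitB ∘ₗ (TensorProduct.comm k k A).toLinearMap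
  ∧ τ ∘ₗ TensorProduct.map mulB mulA
      = TensorProduct.map mulA mulB ∘ₗ midMap k τ ∘ₗ TensorProduct.map τ τ ∘ₗ midMap k τ

/-- The multiplication `(∇_A ⊗ ∇_B) ∘ (1 ⊗ τ ⊗ 1)` of the twisted tensor product. -/
noncomputable def tMul (mulA : A ⊗[k] A →ₗ[k] A) (mulB : B ⊗[k] B →ₗ[k] B)
    (τ : B ⊗[k] A →ₗ[k] A ⊗[k] B) :
    (A ⊗[k] B) ⊗[k] (A ⊗[k] B) →ₗ[k] A ⊗[k] B :=
  TensorProduct.map mulA mulB ∘ₗ midMap k τ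

/-- The unit `(η_A ⊗ η_B) ∘ (k ≅ k ⊗ k)` of the twisted tensor product. -/
noncomputable def tUnit (unitA : k →ₗ[k] A) (unitB : k →ₗ[k] B) : k →ₗ[k] A ⊗[k] B :=
  TensorProduct.map unitA unitB ∘ₗ (TensorProduct.lid k k).symm.toLinearMap

/-- The comultiplication `(1 ⊗ τ⁻¹ ⊗ 1) ∘ (Δ_A ⊗ Δ_B)` of the twisted tensor product. -/
noncomputable def tComul (comulA : A →ₗ[k] A ⊗[k] A) (comulB : B →ₗ[k] B ⊗[k] B)
    (τinv : A ⊗[k] B →ₗ[k] B ⊗[k] A) :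
    A ⊗[k] B →ₗ[k] (A ⊗[k] B) ⊗[k] (A ⊗[k] B) :=
  midMap k τinv ∘ₗ TensorProduct.map comulA comulB

/-- The counit `(k ⊗ k ≅ k) ∘ (ε_A ⊗ ε_B)` of the twisted tensor product. -/
noncomputable def tCounit (counitA : A →ₗ[k] k) (counitB : B →ₗ[k] k) :
    A ⊗[k] B →ₗ[k] k :=
  (TensorProduct.lid k k).toLinearMap ∘ₗ TensorProduct.map counitA counitB

/-- Compatibility of `τ` with the counits (diagram (5) of the paper). -/
def CounitCompat (counitA : A →ₗ[k] k) (counitB : B →ₗ[k] k)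
    (τ : B ⊗[k] A →ₗ[k] A ⊗[k] B) : Prop :=
  TensorProduct.map counitA LinearMap.id ∘ₗ τ
      = (TensorProduct.comm k B k).toLinearMap ∘ₗ TensorProduct.map LinearMap.id counitA
  ∧ TensorProduct.map LinearMap.id counitB ∘ₗ τ
      = (TensorProduct.comm k k A).toLinearMap ∘ₗ TensorProduct.map counitB LinearMap.id

/-- Compatibility of `τ` with the comultiplications (diagram (6) of the paper):
`(Δ_A ⊗ Δ_B)∘τ = (1⊗τ⊗1)∘(τ⊗τ)∘(1⊗τ⊗1)∘(Δ_B ⊗ Δ_A)`. -/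
def ComulCompat (comulA : A →ₗ[k] A ⊗[k] A) (comulB : B →ₗ[k] B ⊗[k] B)
    (τ : B ⊗[k] A →ₗ[k] A ⊗[k] B) : Prop :=
  TensorProduct.map comulA comulB ∘ₗ τ
      = midMap k τ ∘ₗ TensorProduct.map τ τ ∘ₗ midMap k τ ∘ₗ TensorProduct.map comulB comulA

/-- `(f ⊗ 1_B) ∘ τ = (1_A ⊗ τ) ∘ (τ ⊗ 1_A) ∘ (1_B ⊗ f)` for `f : A → A ⊗ A`. -/
def MidACompat (f : A →ₗ[k] A ⊗[k] A) (τ : B ⊗[k] A →ₗ[k] A ⊗[k] B) : Prop :=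
  TensorProduct.map f LinearMap.id ∘ₗ τ
    = (TensorProduct.assoc k A A B).symm.toLinearMap
      ∘ₗ TensorProduct.map LinearMap.id τ
      ∘ₗ (TensorProduct.assoc k A B A).toLinearMap
      ∘ₗ TensorProduct.map τ LinearMap.id
      ∘ₗ (TensorProduct.assoc k B A A).symm.toLinearMap
      ∘ₗ TensorProduct.map LinearMap.id f

/-- `(1_A ⊗ g) ∘ τ = (τ ⊗ 1_B) ∘ (1_B ⊗ τ) ∘ (g ⊗ 1_A)` for `g : B → B ⊗ B`. -/
def MidBCompat (g : B →ₗ[k] B ⊗[k] B) (τ : B ⊗[k] A →ₗ[k] A ⊗[k] B) : Prop :=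
  TensorProduct.map LinearMap.id g ∘ₗ τ
    = (TensorProduct.assoc k A B B).toLinearMap
      ∘ₗ TensorProduct.map τ LinearMap.id
      ∘ₗ (TensorProduct.assoc k B A B).symm.toLinearMap
      ∘ₗ TensorProduct.map LinearMap.id τ
      ∘ₗ (TensorProduct.assoc k B B A).toLinearMap
      ∘ₗ TensorProduct.map g LinearMap.id

/-- `(A, mul, unit, comul, counit)` is a Frobenius algebra (diagrammatically). -/
def IsFrobenius (mul : A ⊗[k] A →ₗ[k] A) (unit : k →ₗ[k] A)
    (comul : A →ₗ[k] A ⊗[k] A) (counit : A →ₗ[k] k) : Prop :=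
  IsUnitalAssoc k mul unit
  ∧ IsCounitalCoassoc k comul counit
  ∧ comul ∘ₗ mul
      = TensorProduct.map LinearMap.id mul ∘ₗ (TensorProduct.assoc k A A A).toLinearMap
          ∘ₗ TensorProduct.map comul LinearMap.id
  ∧ comul ∘ₗ mul
      = TensorProduct.map mul LinearMap.id ∘ₗ (TensorProduct.assoc k A A A).symm.toLinearMap
          ∘ₗ TensorProduct.map LinearMap.id comul

/-- `(A, mul, unit, comul, counit)` is a bialgebra (diagrammatically). -/
def IsBialgebra (mul : A ⊗[k] A →ₗ[k] A) (unit : k →ₗ[k] A)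
    (comul : A →ₗ[k] A ⊗[k] A) (counit : A →ₗ[k] k) : Prop :=
  IsUnitalAssoc k mul unit
  ∧ IsCounitalCoassoc k comul counit
  ∧ counit ∘ₗ mul = (TensorProduct.lid k k).toLinearMap ∘ₗ TensorProduct.map counit counit
  ∧ comul ∘ₗ unit = TensorProduct.map unit unit ∘ₗ (TensorProduct.lid k k).symm.toLinearMap
  ∧ counit ∘ₗ unit = LinearMap.id
  ∧ comul ∘ₗ mul
      = TensorProduct.map mul mul ∘ₗ midMap k (TensorProduct.comm k A A).toLinearMap
          ∘ₗ TensorProduct.map comul comul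

/-- `(A, mul, unit, comul, counit)` is a Hopf algebra: a bialgebra with an antipode. -/
def IsHopf (mul : A ⊗[k] A →ₗ[k] A) (unit : k →ₗ[k] A)
    (comul : A →ₗ[k] A ⊗[k] A) (counit : A →ₗ[k] k) : Prop :=
  IsBialgebra k mul unit comul counit
  ∧ ∃ S : A →ₗ[k] A,
      mul ∘ₗ TensorProduct.map S LinearMap.id ∘ₗ comul = unit ∘ₗ counit
      ∧ mul ∘ₗ TensorProduct.map LinearMap.id S ∘ₗ comul = unit ∘ₗ counit

/-- `Γ` is a right inverse of the multiplication which is a bimodule morphism,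
witnessing separability of the algebra. -/
def IsSeparableWith (mul : A ⊗[k] A →ₗ[k] A) (Γ : A →ₗ[k] A ⊗[k] A) : Prop :=
  mul ∘ₗ Γ = LinearMap.id
  ∧ Γ ∘ₗ mul ∘ₗ TensorProduct.map LinearMap.id mul
      = TensorProduct.map mul mul
          ∘ₗ (TensorProduct.assoc k A A (A ⊗[k] A)).symm.toLinearMap
          ∘ₗ TensorProduct.map LinearMap.id (TensorProduct.assoc k A A A).toLinearMap
          ∘ₗ TensorProduct.map LinearMap.id (TensorProduct.map Γ LinearMap.id)

/-- The pairing `β` is associative: `β∘(1⊗∇) = β∘(∇⊗1)`. -/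
def PairingAssoc (mul : A ⊗[k] A →ₗ[k] A) (β : A ⊗[k] A →ₗ[k] k) : Prop :=
  β ∘ₗ TensorProduct.map LinearMap.id mul ∘ₗ (TensorProduct.assoc k A A A).toLinearMap
    = β ∘ₗ TensorProduct.map mul LinearMap.id

/-- The pairing `β` is non-degenerate with co-pairing `α`:
`(1⊗β)∘(α⊗1) = 1_A` under the canonical isomorphisms. -/
def PairingNondeg (β : A ⊗[k] A →ₗ[k] k) (α : k →ₗ[k] A ⊗[k] A) : Prop :=
  (TensorProduct.rid k A).toLinearMap
      ∘ₗ TensorProduct.map LinearMap.id β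
      ∘ₗ (TensorProduct.assoc k A A A).toLinearMap
      ∘ₗ TensorProduct.map α LinearMap.id
      ∘ₗ (TensorProduct.lid k A).symm.toLinearMap = LinearMap.id

/-- The pairing `β` is symmetric: `β ∘ σ = β` for the flip `σ`. -/
def PairingSymm (β : A ⊗[k] A →ₗ[k] k) : Prop :=
  β ∘ₗ (TensorProduct.comm k A A).toLinearMap = β

end Defs

end TTP

/-!
Half of the hexagon axiom says that `τ` is linear for `B` acting on the left of `B ⊗ A` by
multiplication and on `A ⊗ B` by sliding past `A` along `τ`. Hence `1_A ⊗ τ ⊗ 1_B` is a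
`B`-linear isomorphism from `(A ⊗_τ B) ⊗ (A ⊗_τ B)`, with `B` acting on the left factor, to
`(A ⊗ A) ⊗ (B ⊗ B)`, with `B` sliding past `A ⊗ A` into the left factor of `B ⊗ B`. It carries
`Γ_{A ⊗_τ B}` to `Γ_A ⊗ Γ_B`, whose `B`-linearity, read off at the unit of `B`, is condition (i).
Left `A`-linearity being inherited from `Γ_A`, condition (i) is left linearity of `Γ_{A ⊗_τ B}`.

The same statement for the algebra `Bᵒᵖ ⊗ Aᵒᵖ`, opposite to `A ⊗_τ B`, says that condition (ii) is
right linearity. The section identity holds since `1_A ⊗ τ ⊗ 1_B` cancels its inverse.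
-/

namespace TTP

section Exchange

variable {k : Type*} [CommSemiring k] {B X X' P Q R S Y Z L M N : Type*}
  [AddCommMonoid B] [Module k B] [AddCommMonoid X] [Module k X] [AddCommMonoid X'] [Module k X']
  [AddCommMonoid P] [Module k P] [AddCommMonoid Q] [Module k Q] [AddCommMonoid R] [Module k R]
  [AddCommMonoid S] [Module k S] [AddCommMonoid Y] [Module k Y] [AddCommMonoid Z] [Module k Z]
  [AddCommMonoid L] [Module k L] [AddCommMonoid M] [Module k M] [AddCommMonoid N] [Module k N]

/-- The map `g` commutes with the left actions `ρ` and `ρ'` of `B`. No axioms are imposed on the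
actions, which are arbitrary linear maps. -/
def Intertwines (ρ : B ⊗[k] M →ₗ[k] M) (ρ' : B ⊗[k] N →ₗ[k] N) (g : M →ₗ[k] N) : Prop :=
  g ∘ₗ ρ = ρ' ∘ₗ g.lTensor B

/-- The action of `B` on the left factor of `M ⊗ Z`, i.e. `ρ ⊗ 1_Z`. -/
noncomputable def rTensorAct (Z : Type*) [AddCommMonoid Z] [Module k Z]
    (ρ : B ⊗[k] M →ₗ[k] M) : B ⊗[k] (M ⊗[k] Z) →ₗ[k] M ⊗[k] Z :=
  ρ.rTensor Z ∘ₗ (TensorProduct.assoc k B M Z).symm.toLinearMap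

/-- The map `(1_X ⊗ ρ) ∘ (σ ⊗ 1_M)`, which moves `B` past `X` along `σ` and then applies `ρ`.
For an action `ρ` it is the action of `B` on the induced module `X ⊗ M`. -/
noncomputable def slide (σ : B ⊗[k] X →ₗ[k] X ⊗[k] B) (ρ : B ⊗[k] M →ₗ[k] N) :
    B ⊗[k] (X ⊗[k] M) →ₗ[k] X ⊗[k] N :=
  ρ.lTensor X ∘ₗ (TensorProduct.assoc k X B M).toLinearMap ∘ₗ σ.rTensor M
    ∘ₗ (TensorProduct.assoc k B X M).symm.toLinearMap

/-- The exchange `(1_X ⊗ σ') ∘ (σ ⊗ 1_R)` of `B` with `X ⊗ R`. -/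
noncomputable def tensorExchange (σ : B ⊗[k] X →ₗ[k] X ⊗[k] B) (σ' : B ⊗[k] R →ₗ[k] R ⊗[k] B) :
    B ⊗[k] (X ⊗[k] R) →ₗ[k] (X ⊗[k] R) ⊗[k] B :=
  (TensorProduct.assoc k X R B).symm.toLinearMap ∘ₗ slide σ σ'

/-- The canonical isomorphism `X ⊗ ((R ⊗ S) ⊗ Y) ≃ (X ⊗ R) ⊗ (S ⊗ Y)`. -/
noncomputable def middleAssoc (k X R S Y : Type*) [CommSemiring k]
    [AddCommMonoid X] [Module k X] [AddCommMonoid R] [Module k R]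
    [AddCommMonoid S] [Module k S] [AddCommMonoid Y] [Module k Y] :
    X ⊗[k] ((R ⊗[k] S) ⊗[k] Y) ≃ₗ[k] (X ⊗[k] R) ⊗[k] (S ⊗[k] Y) :=
  (TensorProduct.assoc k X (R ⊗[k] S) Y).symm
    ≪≫ₗ TensorProduct.congr (TensorProduct.assoc k X R S).symm (LinearEquiv.refl k Y)
    ≪≫ₗ TensorProduct.assoc k (X ⊗[k] R) S Y

/-- The isomorphism `1_X ⊗ f ⊗ 1_Y` induced by an isomorphism `f`. -/
noncomputable def midMapEquiv (f : P ⊗[k] Q ≃ₗ[k] R ⊗[k] S) :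
    (X ⊗[k] P) ⊗[k] (Q ⊗[k] Y) ≃ₗ[k] (X ⊗[k] R) ⊗[k] (S ⊗[k] Y) :=
  (middleAssoc k X P Q Y).symm ≪≫ₗ (f.rTensor Y).lTensor X ≪≫ₗ middleAssoc k X R S Y

@[simp]
lemma rTensorAct_tmul (ρ : B ⊗[k] M →ₗ[k] M) (b : B) (m : M) (z : Z) :
    rTensorAct Z ρ (b ⊗ₜ (m ⊗ₜ z)) = ρ (b ⊗ₜ m) ⊗ₜ z := by
  simp [rTensorAct]

@[simp]
lemma slide_tmul (σ : B ⊗[k] X →ₗ[k] X ⊗[k] B) (ρ : B ⊗[k] M →ₗ[k] N) (b : B) (x : X) (m : M) :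
    slide σ ρ (b ⊗ₜ (x ⊗ₜ m)) =
      ρ.lTensor X (TensorProduct.assoc k X B M (σ (b ⊗ₜ x) ⊗ₜ m)) := by
  simp [slide]

@[simp]
lemma middleAssoc_tmul (x : X) (r : R) (s : S) (y : Y) :
    middleAssoc k X R S Y (x ⊗ₜ ((r ⊗ₜ s) ⊗ₜ y)) = (x ⊗ₜ r) ⊗ₜ (s ⊗ₜ y) := by
  simp [middleAssoc]

lemma Intertwines.comp {ρ : B ⊗[k] L →ₗ[k] L} {ρ' : B ⊗[k] M →ₗ[k] M} {ρ'' : B ⊗[k] N →ₗ[k] N}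
    {g' : M →ₗ[k] N} {g : L →ₗ[k] M} (hg' : Intertwines ρ' ρ'' g') (hg : Intertwines ρ ρ' g) :
    Intertwines ρ ρ'' (g' ∘ₗ g) := by
  unfold Intertwines at *
  rw [LinearMap.comp_assoc, hg, ← LinearMap.comp_assoc, hg', LinearMap.comp_assoc,
    LinearMap.lTensor_comp]

lemma Intertwines.symm {ρ : B ⊗[k] M →ₗ[k] M} {ρ' : B ⊗[k] N →ₗ[k] N} {e : M ≃ₗ[k] N}
    (he : Intertwines ρ ρ' e.toLinearMap) : Intertwines ρ' ρ e.symm.toLinearMap := by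
  refine TensorProduct.ext' fun b n ↦ e.injective ?_
  simpa using (LinearMap.congr_fun he (b ⊗ₜ e.symm n)).symm

lemma Intertwines.rTensor {ρ : B ⊗[k] M →ₗ[k] M} {ρ' : B ⊗[k] N →ₗ[k] N} {g : M →ₗ[k] N}
    (hg : Intertwines ρ ρ' g) : Intertwines (rTensorAct Z ρ) (rTensorAct Z ρ') (g.rTensor Z) := by
  ext b m z
  simpa using congr($(LinearMap.congr_fun hg (b ⊗ₜ m)) ⊗ₜ z)

lemma Intertwines.map {σ : B ⊗[k] X →ₗ[k] X ⊗[k] B} {σ' : B ⊗[k] X' →ₗ[k] X' ⊗[k] B}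
    {ρ : B ⊗[k] M →ₗ[k] M} {ρ' : B ⊗[k] N →ₗ[k] N} {f : X →ₗ[k] X'} {g : M →ₗ[k] N}
    (hf : f.rTensor B ∘ₗ σ = σ' ∘ₗ f.lTensor B) (hg : Intertwines ρ ρ' g) :
    Intertwines (slide σ ρ) (slide σ' ρ') (TensorProduct.map f g) := by
  ext b x m
  have hσ : σ' (b ⊗ₜ f x) = f.rTensor B (σ (b ⊗ₜ x)) := (LinearMap.congr_fun hf (b ⊗ₜ x)).symm
  suffices h : ∀ t : X ⊗[k] B,
      TensorProduct.map f g (ρ.lTensor X (TensorProduct.assoc k X B M (t ⊗ₜ m))) =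
        ρ'.lTensor X' (TensorProduct.assoc k X' B N (f.rTensor B t ⊗ₜ g m)) by
    simpa [hσ] using h (σ (b ⊗ₜ x))
  intro t
  induction t using TensorProduct.induction_on with
  | zero => simp
  | tmul x' b' => simpa using congr(f x' ⊗ₜ $(LinearMap.congr_fun hg (b' ⊗ₜ m)))
  | add t t' ht ht' => simp only [TensorProduct.add_tmul, map_add, ht, ht']

lemma rTensorAct_tmul_eq_rTensor_curry (ρ : B ⊗[k] M →ₗ[k] M) (b : B) (t : M ⊗[k] Z) :
    rTensorAct Z ρ (b ⊗ₜ t) = (TensorProduct.curry ρ b).rTensor Z t := by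
  induction t using TensorProduct.induction_on with
  | zero => simp
  | tmul m z => simp
  | add t t' ht ht' => simp only [TensorProduct.tmul_add, map_add, ht, ht']

lemma rTensorAct_tmul_of_left_unit {ρ : B ⊗[k] M →ₗ[k] M} {e : B} (he : ∀ m, ρ (e ⊗ₜ m) = m)
    (t : M ⊗[k] Z) : rTensorAct Z ρ (e ⊗ₜ t) = t := by
  have hone : TensorProduct.curry ρ e = LinearMap.id := LinearMap.ext he
  simp [rTensorAct_tmul_eq_rTensor_curry, hone]

lemma lTensor_assoc_tmul {ρ : B ⊗[k] M →ₗ[k] N} {g : B →ₗ[k] N} {m : M}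
    (h : ∀ b, ρ (b ⊗ₜ m) = g b) (t : X ⊗[k] B) :
    ρ.lTensor X (TensorProduct.assoc k X B M (t ⊗ₜ m)) = g.lTensor X t := by
  induction t using TensorProduct.induction_on with
  | zero => simp
  | tmul x b => simp [h]
  | add t t' ht ht' => simp only [TensorProduct.add_tmul, map_add, ht, ht']

lemma lTensor_assoc_tmul_of_right_unit {mul : B ⊗[k] B →ₗ[k] B} {e : B}
    (he : ∀ b, mul (b ⊗ₜ e) = b) (t : X ⊗[k] B) :
    mul.lTensor X (TensorProduct.assoc k X B B (t ⊗ₜ e)) = t := by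
  simpa using lTensor_assoc_tmul (g := LinearMap.id) he t

-- Evaluating at the unit of `B` recovers `σ` from the action it induces on `X ⊗ B`.
lemma rTensor_comp_eq_of_intertwines_map {σ : B ⊗[k] X →ₗ[k] X ⊗[k] B}
    {σ' : B ⊗[k] X' →ₗ[k] X' ⊗[k] B} {mul : B ⊗[k] B →ₗ[k] B} {ρ : B ⊗[k] N →ₗ[k] N}
    {f : X →ₗ[k] X'} {g : B →ₗ[k] N} {r : N →ₗ[k] B} {e : B} (he : ∀ b, mul (b ⊗ₜ e) = b)
    (hr : r ∘ₗ g = LinearMap.id) (hg : Intertwines mul ρ g)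
    (h : Intertwines (slide σ mul) (slide σ' ρ) (TensorProduct.map f g)) :
    f.rTensor B ∘ₗ σ = σ' ∘ₗ f.lTensor B := by
  have hρ (b : B) : ρ (b ⊗ₜ g e) = g b := by
    simpa [he] using (LinearMap.congr_fun hg (b ⊗ₜ e)).symm
  have hg_inj : Function.Injective (g.lTensor X') := by
    refine Function.LeftInverse.injective (g := r.lTensor X') fun t ↦ ?_
    rw [← LinearMap.comp_apply, ← LinearMap.lTensor_comp, hr, LinearMap.lTensor_id,
      LinearMap.id_apply]
  refine TensorProduct.ext' fun b x ↦ hg_inj ?_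
  calc g.lTensor X' (f.rTensor B (σ (b ⊗ₜ x)))
    _ = TensorProduct.map f g (σ (b ⊗ₜ x)) := by
      rw [← LinearMap.comp_apply, LinearMap.lTensor_comp_rTensor]
    _ = TensorProduct.map f g (slide σ mul (b ⊗ₜ (x ⊗ₜ e))) := by
      rw [slide_tmul, lTensor_assoc_tmul_of_right_unit he]
    _ = slide σ' ρ (b ⊗ₜ (f x ⊗ₜ g e)) := LinearMap.congr_fun h (b ⊗ₜ (x ⊗ₜ e))
    _ = g.lTensor X' (σ' (b ⊗ₜ f x)) := by rw [slide_tmul, lTensor_assoc_tmul hρ]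

lemma intertwines_middleAssoc_rTensorAct (σ : B ⊗[k] X →ₗ[k] X ⊗[k] B)
    (ρ : B ⊗[k] R →ₗ[k] R) :
    Intertwines (slide σ (rTensorAct Y (rTensorAct S ρ))) (rTensorAct (S ⊗[k] Y) (slide σ ρ))
      (middleAssoc k X R S Y).toLinearMap := by
  ext b x r s y
  simp only [LinearMap.comp_apply, TensorProduct.AlgebraTensorModule.curry_apply,
    TensorProduct.curry_apply, LinearMap.restrictScalars_self, LinearEquiv.coe_coe,
    LinearMap.lTensor_tmul, middleAssoc_tmul, rTensorAct_tmul, slide_tmul]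
  induction σ (b ⊗ₜ x) using TensorProduct.induction_on with
  | zero => simp
  | tmul x' b' => simp
  | add t t' ht ht' => simp only [TensorProduct.add_tmul, map_add, ht, ht']

lemma intertwines_middleAssoc_slide (σ : B ⊗[k] X →ₗ[k] X ⊗[k] B)
    (σ' : B ⊗[k] R →ₗ[k] R ⊗[k] B) (ρ : B ⊗[k] S →ₗ[k] S) :
    Intertwines (slide σ (rTensorAct Y (slide σ' ρ)))
      (slide (tensorExchange σ σ') (rTensorAct Y ρ)) (middleAssoc k X R S Y).toLinearMap := by
  ext b x r s y
  simp only [tensorExchange, LinearMap.comp_apply, TensorProduct.AlgebraTensorModule.curry_apply,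
    TensorProduct.curry_apply, LinearMap.restrictScalars_self, LinearEquiv.coe_coe,
    LinearMap.lTensor_tmul, middleAssoc_tmul, slide_tmul]
  induction σ (b ⊗ₜ x) using TensorProduct.induction_on with
  | zero => simp
  | add t t' ht ht' => simp only [TensorProduct.add_tmul, map_add, ht, ht']
  | tmul x' b' =>
    simp only [TensorProduct.assoc_tmul, LinearMap.lTensor_tmul, rTensorAct_tmul, slide_tmul]
    induction σ' (b' ⊗ₜ r) using TensorProduct.induction_on with
    | zero => simp
    | tmul r' b'' => simp
    | add t t' ht ht' =>
      simp only [TensorProduct.add_tmul, TensorProduct.tmul_add, map_add, ht, ht']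

end Exchange

section Bimodule

variable {k : Type*} [CommSemiring k] {X Y : Type*} [AddCommMonoid X] [Module k X]
  [AddCommMonoid Y] [Module k Y]

/-- `Γ : X → X ⊗ X` is a morphism of left modules over the (possibly non-associative) algebra
`X`. -/
def IsLeftLinear (mul : X ⊗[k] X →ₗ[k] X) (Γ : X →ₗ[k] X ⊗[k] X) : Prop :=
  Intertwines mul (rTensorAct X mul) Γ

/-- `Γ : X → X ⊗ X` is a morphism of right modules over the (possibly non-associative) algebra
`X`. -/
def IsRightLinear (mul : X ⊗[k] X →ₗ[k] X) (Γ : X →ₗ[k] X ⊗[k] X) : Prop :=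
  Γ ∘ₗ mul = mul.lTensor X ∘ₗ (TensorProduct.assoc k X X X).toLinearMap ∘ₗ Γ.rTensor X

/-- The multiplication of the opposite algebra. -/
noncomputable abbrev opMul (mul : X ⊗[k] X →ₗ[k] X) : X ⊗[k] X →ₗ[k] X :=
  mul ∘ₗ (TensorProduct.comm k X X).toLinearMap

/-- The map `X → X ⊗ X` with the tensor factors of its values interchanged; it turns sections of
`mul` into sections of `opMul mul`. -/
noncomputable abbrev opComul (Γ : X →ₗ[k] X ⊗[k] X) : X →ₗ[k] X ⊗[k] X :=
  (TensorProduct.comm k X X).toLinearMap ∘ₗ Γ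

lemma isRightLinear_iff_isLeftLinear {mul : X ⊗[k] X →ₗ[k] X} {Γ : X →ₗ[k] X ⊗[k] X}
    {mul' : Y ⊗[k] Y →ₗ[k] Y} {Γ' : Y →ₗ[k] Y ⊗[k] Y} (e : X ≃ₗ[k] Y)
    (hmul : ∀ x x', mul' (e x ⊗ₜ e x') = e (mul (x' ⊗ₜ x)))
    (hΓ : ∀ x, Γ' (e x) = TensorProduct.comm k Y Y (TensorProduct.congr e e (Γ x))) :
    IsRightLinear mul Γ ↔ IsLeftLinear mul' Γ' := by
  have hact (x : X) (t : X ⊗[k] X) :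
      rTensorAct Y mul' (e x ⊗ₜ TensorProduct.comm k Y Y (TensorProduct.congr e e t)) =
        TensorProduct.comm k Y Y (TensorProduct.congr e e
          (mul.lTensor X (TensorProduct.assoc k X X X (t ⊗ₜ x)))) := by
    induction t using TensorProduct.induction_on with
    | zero => simp
    | tmul p q => simp [hmul]
    | add t t' ht ht' =>
      simp only [TensorProduct.add_tmul, TensorProduct.tmul_add, map_add, ht, ht']
  constructor
  · refine fun h ↦ TensorProduct.ext' fun y y' ↦ ?_
    obtain ⟨x, rfl⟩ := e.surjective y
    obtain ⟨x', rfl⟩ := e.surjective y'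
    have hx := LinearMap.congr_fun h (x' ⊗ₜ x)
    simp only [LinearMap.comp_apply, LinearMap.rTensor_tmul, LinearEquiv.coe_coe] at hx
    simp only [LinearMap.comp_apply, LinearMap.lTensor_tmul, hmul, hΓ, hact, hx]
  · refine fun h ↦ TensorProduct.ext' fun x' x ↦ ?_
    have hx := LinearMap.congr_fun h (e x ⊗ₜ e x')
    simp only [LinearMap.comp_apply, LinearMap.lTensor_tmul, hmul, hΓ, hact] at hx
    exact (TensorProduct.congr e e).injective ((TensorProduct.comm k Y Y).injective hx)

lemma IsRightLinear.opposite {mul : X ⊗[k] X →ₗ[k] X} {Γ : X →ₗ[k] X ⊗[k] X}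
    (h : IsRightLinear mul Γ) : IsLeftLinear (opMul mul) (opComul Γ) :=
  (isRightLinear_iff_isLeftLinear (LinearEquiv.refl k X) (by simp) (by simp)).1 h

end Bimodule

section Separable

variable {k : Type*} [Field k] {X : Type*} [AddCommGroup X] [Module k X]

lemma IsUnitalAssoc.one_mul {mul : X ⊗[k] X →ₗ[k] X} {unit : k →ₗ[k] X}
    (h : IsUnitalAssoc k mul unit) (x : X) : mul (unit 1 ⊗ₜ x) = x := by
  simpa using LinearMap.congr_fun h.1 x

lemma IsUnitalAssoc.mul_one {mul : X ⊗[k] X →ₗ[k] X} {unit : k →ₗ[k] X}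
    (h : IsUnitalAssoc k mul unit) (x : X) : mul (x ⊗ₜ unit 1) = x := by
  simpa using LinearMap.congr_fun h.2.1 x

lemma isSeparableWith_iff {mul : X ⊗[k] X →ₗ[k] X} {Γ : X →ₗ[k] X ⊗[k] X} {e : X}
    (one_mul : ∀ x, mul (e ⊗ₜ x) = x) (mul_one : ∀ x, mul (x ⊗ₜ e) = x) :
    IsSeparableWith k mul Γ ↔
      mul ∘ₗ Γ = LinearMap.id ∧ IsLeftLinear mul Γ ∧ IsRightLinear mul Γ := by
  have hact (x z : X) (t : X ⊗[k] X) :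
      TensorProduct.map mul mul ((TensorProduct.assoc k X X (X ⊗[k] X)).symm
        (x ⊗ₜ TensorProduct.assoc k X X X (t ⊗ₜ z))) =
      rTensorAct X mul (x ⊗ₜ mul.lTensor X (TensorProduct.assoc k X X X (t ⊗ₜ z))) := by
    induction t using TensorProduct.induction_on with
    | zero => simp
    | tmul p q => simp
    | add t t' ht ht' =>
      simp only [TensorProduct.add_tmul, TensorProduct.tmul_add, map_add, ht, ht']
  have hbimodule : IsSeparableWith k mul Γ ↔ mul ∘ₗ Γ = LinearMap.id ∧
      ∀ x y z, Γ (mul (x ⊗ₜ mul (y ⊗ₜ z))) =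
        rTensorAct X mul (x ⊗ₜ mul.lTensor X (TensorProduct.assoc k X X X (Γ y ⊗ₜ z))) := by
    refine and_congr_right fun _ ↦ ⟨fun h x y z ↦ ?_, fun h ↦ ?_⟩
    · simpa [hact] using LinearMap.congr_fun h (x ⊗ₜ (y ⊗ₜ z))
    · ext x y z
      simpa [hact] using h x y z
  rw [hbimodule]
  refine and_congr_right fun _ ↦ ⟨fun h ↦ ⟨?_, ?_⟩, fun ⟨hl, hr⟩ x y z ↦ ?_⟩
  · refine TensorProduct.ext' fun x y ↦ ?_
    simpa [mul_one, lTensor_assoc_tmul_of_right_unit mul_one] using h x y e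
  · refine TensorProduct.ext' fun y z ↦ ?_
    simpa [one_mul, rTensorAct_tmul_of_left_unit one_mul] using h e y z
  · have hxyz := LinearMap.congr_fun hl (x ⊗ₜ mul (y ⊗ₜ z))
    have hyz := LinearMap.congr_fun hr (y ⊗ₜ z)
    simp only [LinearMap.comp_apply, LinearMap.rTensor_tmul, LinearMap.lTensor_tmul,
      LinearEquiv.coe_coe] at hxyz hyz
    rw [hxyz, hyz]

end Separable

section Mirror

variable {k : Type*} [CommSemiring k] {X P Q Y R S : Type*}
  [AddCommMonoid X] [Module k X] [AddCommMonoid P] [Module k P]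
  [AddCommMonoid Q] [Module k Q] [AddCommMonoid Y] [Module k Y]
  [AddCommMonoid R] [Module k R] [AddCommMonoid S] [Module k S]

/-- The isomorphism `f` with the tensor factors of its domain and codomain interchanged. For a
twisting map of `A` and `B` it is the corresponding twisting map of `Bᵒᵖ` and `Aᵒᵖ`. -/
noncomputable def mirror (f : P ⊗[k] Q ≃ₗ[k] R ⊗[k] S) : Q ⊗[k] P ≃ₗ[k] S ⊗[k] R :=
  TensorProduct.comm k Q P ≪≫ₗ f ≪≫ₗ TensorProduct.comm k R S

/-- The order-reversing isomorphism `(X ⊗ P) ⊗ (Q ⊗ Y) ≃ (Y ⊗ Q) ⊗ (P ⊗ X)`. -/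
noncomputable def reverse (k X P Q Y : Type*) [CommSemiring k]
    [AddCommMonoid X] [Module k X] [AddCommMonoid P] [Module k P]
    [AddCommMonoid Q] [Module k Q] [AddCommMonoid Y] [Module k Y] :
    (X ⊗[k] P) ⊗[k] (Q ⊗[k] Y) ≃ₗ[k] (Y ⊗[k] Q) ⊗[k] (P ⊗[k] X) :=
  TensorProduct.congr (TensorProduct.comm k X P) (TensorProduct.comm k Q Y)
    ≪≫ₗ TensorProduct.comm k (P ⊗[k] X) (Y ⊗[k] Q)

@[simp]
lemma mirror_tmul (f : P ⊗[k] Q ≃ₗ[k] R ⊗[k] S) (p : P) (q : Q) :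
    mirror f (q ⊗ₜ p) = TensorProduct.comm k R S (f (p ⊗ₜ q)) := by
  simp [mirror]

@[simp]
lemma reverse_tmul (x : X) (p : P) (q : Q) (y : Y) :
    reverse k X P Q Y ((x ⊗ₜ p) ⊗ₜ (q ⊗ₜ y)) = (y ⊗ₜ q) ⊗ₜ (p ⊗ₜ x) := by
  simp [reverse]

lemma map_comp_comm_reverse (f : X ⊗[k] P →ₗ[k] R) (g : Q ⊗[k] Y →ₗ[k] S)
    (t : (X ⊗[k] P) ⊗[k] (Q ⊗[k] Y)) :
    TensorProduct.map (g ∘ₗ (TensorProduct.comm k Y Q).toLinearMap)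
        (f ∘ₗ (TensorProduct.comm k P X).toLinearMap) (reverse k X P Q Y t) =
      TensorProduct.comm k R S (TensorProduct.map f g t) := by
  suffices h : TensorProduct.map (g ∘ₗ (TensorProduct.comm k Y Q).toLinearMap)
        (f ∘ₗ (TensorProduct.comm k P X).toLinearMap) ∘ₗ (reverse k X P Q Y).toLinearMap =
      (TensorProduct.comm k R S).toLinearMap ∘ₗ TensorProduct.map f g from
    LinearMap.congr_fun h t
  ext x p q y
  simp

lemma map_comm_comp_comm (f : X →ₗ[k] P ⊗[k] Q) (g : Y →ₗ[k] R ⊗[k] S) (t : X ⊗[k] Y) :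
    TensorProduct.map ((TensorProduct.comm k R S).toLinearMap ∘ₗ g)
        ((TensorProduct.comm k P Q).toLinearMap ∘ₗ f) (TensorProduct.comm k X Y t) =
      reverse k P Q R S (TensorProduct.map f g t) := by
  induction t using TensorProduct.induction_on with
  | zero => simp
  | tmul x y => simp [reverse]
  | add t t' ht ht' => simp only [map_add, ht, ht']

lemma tensorExchange_mirror (σ : P ⊗[k] X ≃ₗ[k] X ⊗[k] P) (σ' : Q ⊗[k] X ≃ₗ[k] X ⊗[k] Q)
    (x : X) (t : Q ⊗[k] P) :
    tensorExchange (mirror σ).toLinearMap (mirror σ').toLinearMap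
        (x ⊗ₜ TensorProduct.comm k Q P t) =
      TensorProduct.comm k X (P ⊗[k] Q) ((TensorProduct.comm k Q P).lTensor X
        (TensorProduct.assoc k X Q P (σ'.toLinearMap.rTensor P
          ((TensorProduct.assoc k Q X P).symm (σ.toLinearMap.lTensor Q
            (TensorProduct.assoc k Q P X (t ⊗ₜ x))))))) := by
  induction t using TensorProduct.induction_on with
  | zero => simp
  | add t t' ht ht' =>
    simp only [TensorProduct.add_tmul, TensorProduct.tmul_add, map_add, ht, ht']
  | tmul q p =>
    simp only [tensorExchange, LinearMap.comp_apply, LinearEquiv.coe_coe, slide_tmul,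
      TensorProduct.comm_tmul, TensorProduct.assoc_tmul, LinearMap.lTensor_tmul, mirror_tmul]
    induction σ (p ⊗ₜ x) using TensorProduct.induction_on with
    | zero => simp
    | add u v hu hv => simp only [TensorProduct.add_tmul, TensorProduct.tmul_add, map_add, hu, hv]
    | tmul x' p' =>
      simp only [TensorProduct.comm_tmul, TensorProduct.assoc_tmul, LinearMap.lTensor_tmul,
        LinearEquiv.coe_coe, mirror_tmul, TensorProduct.assoc_symm_tmul, LinearMap.rTensor_tmul]
      induction σ' (q ⊗ₜ x') using TensorProduct.induction_on with
      | zero => simp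
      | tmul c d => simp
      | add u v hu hv =>
        simp only [TensorProduct.add_tmul, TensorProduct.tmul_add, map_add, hu, hv]

end Mirror

section MidMap

variable {k : Type*} [Field k] {X X' P Q Y R S : Type*}
  [AddCommGroup X] [Module k X] [AddCommGroup X'] [Module k X'] [AddCommGroup P] [Module k P]
  [AddCommGroup Q] [Module k Q] [AddCommGroup Y] [Module k Y]
  [AddCommGroup R] [Module k R] [AddCommGroup S] [Module k S]

@[simp]
lemma midMap_tmul (f : P ⊗[k] Q →ₗ[k] R ⊗[k] S) (x : X) (p : P) (q : Q) (y : Y) :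
    midMap k f ((x ⊗ₜ p) ⊗ₜ (q ⊗ₜ y)) = middleAssoc k X R S Y (x ⊗ₜ (f (p ⊗ₜ q) ⊗ₜ y)) := by
  simp [midMap, middleAssoc]

lemma midMap_eq_conj (f : P ⊗[k] Q →ₗ[k] R ⊗[k] S) :
    midMap k f = (middleAssoc k X R S Y).toLinearMap ∘ₗ (f.rTensor Y).lTensor X ∘ₗ
      (middleAssoc k X P Q Y).symm.toLinearMap := by
  ext x p q y
  have h : (middleAssoc k X P Q Y).symm ((x ⊗ₜ p) ⊗ₜ (q ⊗ₜ y)) = x ⊗ₜ ((p ⊗ₜ q) ⊗ₜ y) := by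
    rw [LinearEquiv.symm_apply_eq, middleAssoc_tmul]
  simp [h]

lemma coe_midMapEquiv (f : P ⊗[k] Q ≃ₗ[k] R ⊗[k] S) :
    (midMapEquiv f).toLinearMap = midMap (X := X) (Y := Y) k f.toLinearMap :=
  (midMap_eq_conj f.toLinearMap).symm

lemma coe_midMapEquiv_symm (f : P ⊗[k] Q ≃ₗ[k] R ⊗[k] S) :
    (midMapEquiv f).symm.toLinearMap = midMap (X := X) (Y := Y) k f.symm.toLinearMap :=
  coe_midMapEquiv f.symm

lemma midMap_rTensor_rTensor (f : P ⊗[k] Q →ₗ[k] R ⊗[k] S) (g : X →ₗ[k] X')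
    (t : (X ⊗[k] P) ⊗[k] (Q ⊗[k] Y)) :
    midMap k f ((g.rTensor P).rTensor (Q ⊗[k] Y) t) =
      (g.rTensor R).rTensor (S ⊗[k] Y) (midMap k f t) := by
  suffices h : midMap k f ∘ₗ (g.rTensor P).rTensor (Q ⊗[k] Y) =
      (g.rTensor R).rTensor (S ⊗[k] Y) ∘ₗ midMap k f from LinearMap.congr_fun h t
  ext x p q y
  simp only [LinearMap.comp_apply, TensorProduct.AlgebraTensorModule.curry_apply,
    TensorProduct.curry_apply, LinearMap.restrictScalars_self, LinearMap.rTensor_tmul, midMap_tmul]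
  induction f (p ⊗ₜ q) using TensorProduct.induction_on with
  | zero => simp
  | tmul r s => simp
  | add u v hu hv => simp only [TensorProduct.add_tmul, TensorProduct.tmul_add, map_add, hu, hv]

lemma intertwines_midMap {B : Type*} [AddCommGroup B] [Module k B]
    {σ : B ⊗[k] X →ₗ[k] X ⊗[k] B} {σ' : B ⊗[k] R →ₗ[k] R ⊗[k] B} {ρ : B ⊗[k] P →ₗ[k] P}
    {ρ' : B ⊗[k] S →ₗ[k] S} {g : P ⊗[k] Q →ₗ[k] R ⊗[k] S}
    (hg : Intertwines (rTensorAct Q ρ) (slide σ' ρ') g) :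
    Intertwines (rTensorAct (Q ⊗[k] Y) (slide σ ρ))
      (slide (tensorExchange σ σ') (rTensorAct Y ρ')) (midMap k g) := by
  have hid : LinearMap.id.rTensor B ∘ₗ σ = σ ∘ₗ LinearMap.id.lTensor B := by simp
  rw [midMap_eq_conj]
  exact (intertwines_middleAssoc_slide σ σ' ρ').comp
    ((Intertwines.map hid hg.rTensor).comp (intertwines_middleAssoc_rTensorAct σ ρ).symm)

lemma midMap_mirror_reverse (f : P ⊗[k] Q ≃ₗ[k] R ⊗[k] S) (t : (X ⊗[k] P) ⊗[k] (Q ⊗[k] Y)) :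
    midMap k (mirror f).toLinearMap (reverse k X P Q Y t) =
      reverse k X R S Y (midMap k f.toLinearMap t) := by
  suffices h : midMap k (mirror f).toLinearMap ∘ₗ (reverse k X P Q Y).toLinearMap =
      (reverse k X R S Y).toLinearMap ∘ₗ midMap k f.toLinearMap from LinearMap.congr_fun h t
  ext x p q y
  simp only [LinearMap.comp_apply, TensorProduct.AlgebraTensorModule.curry_apply,
    TensorProduct.curry_apply, LinearMap.restrictScalars_self, LinearEquiv.coe_coe, midMap_tmul,
    reverse_tmul, mirror_tmul]
  induction f (p ⊗ₜ q) using TensorProduct.induction_on with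
  | zero => simp
  | tmul r s => simp
  | add u v hu hv => simp only [TensorProduct.add_tmul, TensorProduct.tmul_add, map_add, hu, hv]

end MidMap

section Twisted

variable {k : Type*} [Field k] {A B : Type*} [AddCommGroup A] [Module k A]
  [AddCommGroup B] [Module k B]
  {mulA : A ⊗[k] A →ₗ[k] A} {unitA : k →ₗ[k] A} {mulB : B ⊗[k] B →ₗ[k] B} {unitB : k →ₗ[k] B}
  {ΓA : A →ₗ[k] A ⊗[k] A} {ΓB : B →ₗ[k] B ⊗[k] B}

lemma IsTwisting.tmul_one {τ : B ⊗[k] A →ₗ[k] A ⊗[k] B} (hτ : IsTwisting k mulA unitA mulB unitB τ)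
    (b : B) : τ (b ⊗ₜ unitA 1) = unitA 1 ⊗ₜ b := by
  simpa using LinearMap.congr_fun hτ.1 (b ⊗ₜ 1)

lemma IsTwisting.one_tmul {τ : B ⊗[k] A →ₗ[k] A ⊗[k] B} (hτ : IsTwisting k mulA unitA mulB unitB τ)
    (a : A) : τ (unitB 1 ⊗ₜ a) = a ⊗ₜ unitB 1 := by
  simpa using LinearMap.congr_fun hτ.2.1 (1 ⊗ₜ a)

lemma tMul_tmul (τ : B ⊗[k] A →ₗ[k] A ⊗[k] B) (a : A) (b : B) (t : A ⊗[k] B) :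
    tMul k mulA mulB τ ((a ⊗ₜ b) ⊗ₜ t) =
      (TensorProduct.curry mulA a).rTensor B (slide τ mulB (b ⊗ₜ t)) := by
  induction t using TensorProduct.induction_on with
  | zero => simp
  | add t t' ht ht' => simp only [TensorProduct.tmul_add, map_add, ht, ht']
  | tmul c d =>
    simp only [tMul, LinearMap.comp_apply, midMap_tmul, slide_tmul]
    induction τ (b ⊗ₜ c) using TensorProduct.induction_on with
    | zero => simp
    | tmul p q => simp
    | add u v hu hv => simp only [TensorProduct.add_tmul, TensorProduct.tmul_add, map_add, hu, hv]

lemma IsTwisting.intertwines {τ : B ⊗[k] A →ₗ[k] A ⊗[k] B}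
    (hτ : IsTwisting k mulA unitA mulB unitB τ) (one_mul : ∀ a, mulA (unitA 1 ⊗ₜ a) = a) :
    Intertwines (rTensorAct A mulB) (slide τ mulB) τ := by
  ext b b' a
  have hone : TensorProduct.curry mulA (unitA 1) = LinearMap.id := LinearMap.ext one_mul
  have h : τ (mulB (b ⊗ₜ b') ⊗ₜ a) =
      tMul k mulA mulB τ ((unitA 1 ⊗ₜ b) ⊗ₜ τ (b' ⊗ₜ a)) := by
    simpa [tMul, one_mul, hτ.tmul_one] using
      LinearMap.congr_fun hτ.2.2 ((b ⊗ₜ b') ⊗ₜ (unitA 1 ⊗ₜ a))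
  simpa [tMul_tmul, hone] using h

lemma tMul_one_tmul {τ : B ⊗[k] A →ₗ[k] A ⊗[k] B} (hA : ∀ a, mulA (unitA 1 ⊗ₜ a) = a)
    (hB : ∀ b, mulB (unitB 1 ⊗ₜ b) = b) (hτ : IsTwisting k mulA unitA mulB unitB τ)
    (t : A ⊗[k] B) : tMul k mulA mulB τ ((unitA 1 ⊗ₜ unitB 1) ⊗ₜ t) = t := by
  rw [tMul_tmul]
  induction t using TensorProduct.induction_on with
  | zero => simp
  | tmul a b => simp [hτ.one_tmul, hA, hB]
  | add t t' ht ht' => simp only [TensorProduct.tmul_add, map_add, ht, ht']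

lemma tMul_tmul_one {τ : B ⊗[k] A →ₗ[k] A ⊗[k] B} (hA : ∀ a, mulA (a ⊗ₜ unitA 1) = a)
    (hB : ∀ b, mulB (b ⊗ₜ unitB 1) = b) (hτ : IsTwisting k mulA unitA mulB unitB τ)
    (t : A ⊗[k] B) : tMul k mulA mulB τ (t ⊗ₜ (unitA 1 ⊗ₜ unitB 1)) = t := by
  induction t using TensorProduct.induction_on with
  | zero => simp
  | tmul a b => simp [tMul_tmul, hτ.tmul_one, hA, hB]
  | add t t' ht ht' => simp only [TensorProduct.add_tmul, map_add, ht, ht']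

lemma tMul_comp_tComul (τ : B ⊗[k] A ≃ₗ[k] A ⊗[k] B) (hA : mulA ∘ₗ ΓA = LinearMap.id)
    (hB : mulB ∘ₗ ΓB = LinearMap.id) :
    tMul k mulA mulB τ.toLinearMap ∘ₗ tComul k ΓA ΓB τ.symm.toLinearMap = LinearMap.id := by
  rw [tMul, tComul, ← coe_midMapEquiv, ← coe_midMapEquiv_symm, LinearMap.comp_assoc,
    ← LinearMap.comp_assoc (TensorProduct.map ΓA ΓB), LinearEquiv.comp_symm, LinearMap.id_comp,
    ← TensorProduct.map_comp, hA, hB, TensorProduct.map_id]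

lemma tComul_rTensor_curry (τinv : A ⊗[k] B →ₗ[k] B ⊗[k] A) (hΓA : IsLeftLinear mulA ΓA) (a : A)
    (t : A ⊗[k] B) :
    tComul k ΓA ΓB τinv ((TensorProduct.curry mulA a).rTensor B t) =
      ((TensorProduct.curry mulA a).rTensor B).rTensor (A ⊗[k] B) (tComul k ΓA ΓB τinv t) := by
  have hΓ (c : A) : ΓA (mulA (a ⊗ₜ c)) = (TensorProduct.curry mulA a).rTensor A (ΓA c) :=
    (LinearMap.congr_fun hΓA (a ⊗ₜ c)).trans (rTensorAct_tmul_eq_rTensor_curry _ _ _)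
  have hmap : TensorProduct.map ΓA ΓB ((TensorProduct.curry mulA a).rTensor B t) =
      ((TensorProduct.curry mulA a).rTensor A).rTensor (B ⊗[k] B)
        (TensorProduct.map ΓA ΓB t) := by
    induction t using TensorProduct.induction_on with
    | zero => simp
    | tmul c d => simp [hΓ]
    | add t t' ht ht' => simp only [map_add, ht, ht']
  simp only [tComul, LinearMap.comp_apply, hmap, midMap_rTensor_rTensor]

lemma isLeftLinear_tComul_iff_intertwines (τ : B ⊗[k] A →ₗ[k] A ⊗[k] B)
    (τinv : A ⊗[k] B →ₗ[k] B ⊗[k] A) (one_mul : ∀ a, mulA (unitA 1 ⊗ₜ a) = a)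
    (hΓA : IsLeftLinear mulA ΓA) :
    IsLeftLinear (tMul k mulA mulB τ) (tComul k ΓA ΓB τinv) ↔
      Intertwines (slide τ mulB) (rTensorAct (A ⊗[k] B) (slide τ mulB))
        (tComul k ΓA ΓB τinv) := by
  have hact (a : A) (b : B) (u : (A ⊗[k] B) ⊗[k] (A ⊗[k] B)) :
      rTensorAct (A ⊗[k] B) (tMul k mulA mulB τ) ((a ⊗ₜ b) ⊗ₜ u) =
        ((TensorProduct.curry mulA a).rTensor B).rTensor (A ⊗[k] B)
          (rTensorAct (A ⊗[k] B) (slide τ mulB) (b ⊗ₜ u)) := by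
    induction u using TensorProduct.induction_on with
    | zero => simp
    | tmul s t => simp [tMul_tmul]
    | add u v hu hv => simp only [TensorProduct.tmul_add, map_add, hu, hv]
  have hone : TensorProduct.curry mulA (unitA 1) = LinearMap.id := LinearMap.ext one_mul
  constructor <;> intro h
  · refine TensorProduct.ext' fun b t ↦ ?_
    simpa [tMul_tmul, hact, hone] using LinearMap.congr_fun h ((unitA 1 ⊗ₜ b) ⊗ₜ t)
  · refine TensorProduct.ext (TensorProduct.ext' fun a b ↦ LinearMap.ext fun t ↦ ?_)
    have hb := LinearMap.congr_fun h (b ⊗ₜ t)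
    simp only [LinearMap.comp_apply, LinearMap.lTensor_tmul] at hb
    simp [tMul_tmul, hact, tComul_rTensor_curry _ hΓA, hb]

lemma isLeftLinear_tComul_iff {τ : B ⊗[k] A ≃ₗ[k] A ⊗[k] B}
    (hτ : IsTwisting k mulA unitA mulB unitB τ.toLinearMap)
    (one_mul : ∀ a, mulA (unitA 1 ⊗ₜ a) = a) (mul_one : ∀ b, mulB (b ⊗ₜ unitB 1) = b)
    (hΓA : IsLeftLinear mulA ΓA) (hΓB : IsLeftLinear mulB ΓB)
    (hmulΓB : mulB ∘ₗ ΓB = LinearMap.id) :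
    IsLeftLinear (tMul k mulA mulB τ.toLinearMap) (tComul k ΓA ΓB τ.symm.toLinearMap) ↔
      MidACompat k ΓA τ.toLinearMap := by
  have hmid : Intertwines (rTensorAct (A ⊗[k] B) (slide τ.toLinearMap mulB))
      (slide (tensorExchange τ.toLinearMap τ.toLinearMap) (rTensorAct B mulB))
      (midMapEquiv (X := A) (Y := B) τ).toLinearMap := by
    rw [coe_midMapEquiv]
    exact intertwines_midMap (hτ.intertwines one_mul)
  have hmid_comp : (midMapEquiv (X := A) (Y := B) τ).toLinearMap ∘ₗ
      tComul k ΓA ΓB τ.symm.toLinearMap = TensorProduct.map ΓA ΓB := by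
    rw [tComul, ← coe_midMapEquiv_symm, ← LinearMap.comp_assoc, LinearEquiv.comp_symm,
      LinearMap.id_comp]
  rw [isLeftLinear_tComul_iff_intertwines _ _ one_mul hΓA]
  constructor
  · intro h
    have hmap := hmid.comp h
    rw [hmid_comp] at hmap
    exact rTensor_comp_eq_of_intertwines_map mul_one hmulΓB hΓB hmap
  · intro h
    have hf : ΓA.rTensor B ∘ₗ τ.toLinearMap =
        tensorExchange τ.toLinearMap τ.toLinearMap ∘ₗ ΓA.lTensor B := h
    rw [tComul, ← coe_midMapEquiv_symm]
    exact hmid.symm.comp (Intertwines.map hf hΓB)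

end Twisted

section Opposite

variable {k : Type*} [Field k] {A B : Type*} [AddCommGroup A] [Module k A]
  [AddCommGroup B] [Module k B]
  {mulA : A ⊗[k] A →ₗ[k] A} {unitA : k →ₗ[k] A} {mulB : B ⊗[k] B →ₗ[k] B} {unitB : k →ₗ[k] B}
  {ΓA : A →ₗ[k] A ⊗[k] A} {ΓB : B →ₗ[k] B ⊗[k] B}

lemma tMul_mirror (τ : B ⊗[k] A ≃ₗ[k] A ⊗[k] B) (t : (A ⊗[k] B) ⊗[k] (A ⊗[k] B)) :
    tMul k (opMul mulB) (opMul mulA) (mirror τ).toLinearMap (reverse k A B A B t) =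
      TensorProduct.comm k A B (tMul k mulA mulB τ.toLinearMap t) := by
  simp only [tMul, LinearMap.comp_apply, midMap_mirror_reverse, map_comp_comm_reverse]

lemma tComul_mirror (τ : B ⊗[k] A ≃ₗ[k] A ⊗[k] B) (t : A ⊗[k] B) :
    tComul k (opComul ΓB) (opComul ΓA) (mirror τ).symm.toLinearMap (TensorProduct.comm k A B t) =
      reverse k A B A B (tComul k ΓA ΓB τ.symm.toLinearMap t) := by
  simp only [tComul, LinearMap.comp_apply, map_comm_comp_comm]
  exact midMap_mirror_reverse τ.symm _

lemma isTwisting_mirror {τ : B ⊗[k] A ≃ₗ[k] A ⊗[k] B}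
    (hτ : IsTwisting k mulA unitA mulB unitB τ.toLinearMap) :
    IsTwisting k (opMul mulB) unitB (opMul mulA) unitA (mirror τ).toLinearMap := by
  refine ⟨?_, ?_, ?_⟩
  · ext a
    simpa using congr(TensorProduct.comm k A B $(hτ.one_tmul a))
  · ext b
    simpa using congr(TensorProduct.comm k A B $(hτ.tmul_one b))
  · have hmap (t : (B ⊗[k] A) ⊗[k] (B ⊗[k] A)) :
        TensorProduct.map (mirror τ).toLinearMap (mirror τ).toLinearMap (reverse k B A B A t) =
          reverse k A B A B (TensorProduct.map τ.toLinearMap τ.toLinearMap t) := by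
      suffices h : TensorProduct.map (mirror τ).toLinearMap (mirror τ).toLinearMap ∘ₗ
            (reverse k B A B A).toLinearMap =
          (reverse k A B A B).toLinearMap ∘ₗ TensorProduct.map τ.toLinearMap τ.toLinearMap from
        LinearMap.congr_fun h t
      ext b a b' a'
      simp [reverse]
    refine LinearMap.ext fun t ↦ ?_
    obtain ⟨t, rfl⟩ := (reverse k B B A A).surjective t
    have h := LinearMap.congr_fun hτ.2.2 t
    simp only [LinearMap.comp_apply] at h
    simp only [LinearMap.comp_apply, midMap_mirror_reverse, map_comp_comm_reverse, hmap, ← h]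
    simp [mirror]

lemma midBCompat_iff_midACompat_mirror (τ : B ⊗[k] A ≃ₗ[k] A ⊗[k] B) :
    MidBCompat k ΓB τ.toLinearMap ↔
      MidACompat k (opComul ΓB) (mirror τ).toLinearMap := by
  let e : A ⊗[k] (B ⊗[k] B) ≃ₗ[k] (B ⊗[k] B) ⊗[k] A :=
    (TensorProduct.comm k B B).lTensor A ≪≫ₗ TensorProduct.comm k A (B ⊗[k] B)
  have hleft (t : A ⊗[k] B) :
      (opComul ΓB).rTensor A (TensorProduct.comm k A B t) = e (ΓB.lTensor A t) := by
    induction t using TensorProduct.induction_on with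
    | zero => simp
    | tmul a b => simp [e]
    | add t t' ht ht' => simp only [map_add, ht, ht']
  constructor
  · refine fun h ↦ TensorProduct.ext' fun a b ↦ ?_
    have hba := LinearMap.congr_fun h (b ⊗ₜ a)
    calc (opComul ΓB).rTensor A (mirror τ (a ⊗ₜ b))
      _ = e (ΓB.lTensor A (τ (b ⊗ₜ a))) := by rw [mirror_tmul, hleft]
      _ = _ := congrArg e hba
      _ = _ := (tensorExchange_mirror τ τ a (ΓB b)).symm
  · refine fun h ↦ TensorProduct.ext' fun b a ↦ e.injective ?_
    have hab := LinearMap.congr_fun h (a ⊗ₜ b)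
    calc e (ΓB.lTensor A (τ (b ⊗ₜ a)))
      _ = (opComul ΓB).rTensor A (mirror τ (a ⊗ₜ b)) := by rw [mirror_tmul, hleft]
      _ = _ := hab
      _ = _ := tensorExchange_mirror τ τ a (ΓB b)

lemma isRightLinear_tComul_iff {τ : B ⊗[k] A ≃ₗ[k] A ⊗[k] B}
    (hτ : IsTwisting k mulA unitA mulB unitB τ.toLinearMap)
    (mul_one : ∀ b, mulB (b ⊗ₜ unitB 1) = b) (one_mul : ∀ a, mulA (unitA 1 ⊗ₜ a) = a)
    (hΓA : IsRightLinear mulA ΓA) (hΓB : IsRightLinear mulB ΓB)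
    (hmulΓA : mulA ∘ₗ ΓA = LinearMap.id) :
    IsRightLinear (tMul k mulA mulB τ.toLinearMap) (tComul k ΓA ΓB τ.symm.toLinearMap) ↔
      MidBCompat k ΓB τ.toLinearMap := by
  have hmulΓA' : opMul mulA ∘ₗ opComul ΓA = LinearMap.id :=
    LinearMap.ext fun a ↦ by simpa using LinearMap.congr_fun hmulΓA a
  rw [midBCompat_iff_midACompat_mirror, ← isLeftLinear_tComul_iff (isTwisting_mirror hτ)
    (by simpa using mul_one) (by simpa using one_mul) hΓB.opposite hΓA.opposite hmulΓA']
  exact isRightLinear_iff_isLeftLinear (TensorProduct.comm k A B)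
    (fun x x' ↦ tMul_mirror τ (x' ⊗ₜ x)) (fun x ↦ tComul_mirror τ x)

end Opposite

end TTP

open TTP in
/-- separability of the twisted tensor product (Theorem 3.8 of the
paper): diagrams (12) and (13) commute iff `A ⊗_τ B` is separable with
`Γ_{A⊗_τ B} = (1⊗τ⁻¹⊗1)∘(Γ_A⊗Γ_B)` a bimodule-morphism right inverse of its
multiplication. -/
theorem twistedTensorProduct_separable_iff
    {k A B : Type*} [Field k]
    [AddCommGroup A] [Module k A] [AddCommGroup B] [Module k B]
    (mulA : A ⊗[k] A →ₗ[k] A) (unitA : k →ₗ[k] A)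
    (mulB : B ⊗[k] B →ₗ[k] B) (unitB : k →ₗ[k] B)
    (hA : IsUnitalAssoc k mulA unitA) (hB : IsUnitalAssoc k mulB unitB)
    (ΓA : A →ₗ[k] A ⊗[k] A) (ΓB : B →ₗ[k] B ⊗[k] B)
    (hΓA : IsSeparableWith k mulA ΓA) (hΓB : IsSeparableWith k mulB ΓB)
    (τ : B ⊗[k] A ≃ₗ[k] A ⊗[k] B)
    (hτ : IsTwisting k mulA unitA mulB unitB τ.toLinearMap) :
    (MidACompat k ΓA τ.toLinearMap ∧ MidBCompat k ΓB τ.toLinearMap)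
      ↔ IsSeparableWith k (tMul k mulA mulB τ.toLinearMap)
          (tComul k ΓA ΓB τ.symm.toLinearMap) := by
  obtain ⟨hsecA, hlA, hrA⟩ := (isSeparableWith_iff hA.one_mul hA.mul_one).1 hΓA
  obtain ⟨hsecB, hlB, hrB⟩ := (isSeparableWith_iff hB.one_mul hB.mul_one).1 hΓB
  rw [isSeparableWith_iff (tMul_one_tmul hA.one_mul hB.one_mul hτ)
      (tMul_tmul_one hA.mul_one hB.mul_one hτ),
    isLeftLinear_tComul_iff hτ hA.one_mul hB.mul_one hlA hlB hsecB,
    isRightLinear_tComul_iff hτ hB.mul_one hA.one_mul hrA hrB hsecA,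
    and_iff_right (tMul_comp_tComul τ hsecA hsecB)]
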